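/- arXiv:2107.07819 — 3 statements merged into one kernel-verified Lean document; each statement's English description precedes it below -/
import Mathlib

section
/- Let A be a complex *-algebra that is algebraic. Then A admits a pre-C*-norm if and only if the involution of A is proper. -/
/-- A (possibly non-unital) complex algebra is *algebraic* if every element generates a
finite-dimensional subalgebra (equivalently, every element is a root of a nonzero
polynomial with complex coefficients). -/
def IsAlgebraicAlgebra (A : Type*) [NonUnitalRing A] [Module ℂ A] : Prop :=
  ∀ a : A, ∃ S : NonUnitalSubalgebra ℂ A, a ∈ S ∧ FiniteDimensional ℂ S

/-- A pre-C*-norm on a complex `*`-algebra: a submultiplicative norm `σ` with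
`σ (x* x) = σ x ^ 2`. -/
def HasPreCstarNorm (A : Type*) [NonUnitalRing A] [Module ℂ A] [Star A] : Prop :=
  ∃ σ : A → ℝ,
    (∀ a : A, σ a = 0 ↔ a = 0) ∧
    (∀ (c : ℂ) (a : A), σ (c • a) = ‖c‖ * σ a) ∧
    (∀ a b : A, σ (a + b) ≤ σ a + σ b) ∧
    (∀ a b : A, σ (a * b) ≤ σ a * σ b) ∧
    (∀ a : A, σ (star a * a) = σ a ^ 2)

/-- The involution is proper if `a* a = 0` implies `a = 0`. -/
def HasProperInvolution (A : Type*) [NonUnitalRing A] [Star A] : Prop :=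
  ∀ a : A, star a * a = 0 → a = 0

/-- Hermitian: every selfadjoint element has real spectrum (computed in the
unitization `ℂ ⊕ A`). -/
def IsHermitianStarAlgebra (A : Type*) [NonUnitalRing A] [Module ℂ A]
    [SMulCommClass ℂ A A] [IsScalarTower ℂ A A] [Star A] : Prop :=
  ∀ a : A, star a = a → ∀ z ∈ spectrum ℂ (a : Unitization ℂ A), z.im = 0

/-- Semisimple: the Jacobson radical is `{0}` (expressed via the unitization, whose
Jacobson radical meets `A` exactly in the Jacobson radical of `A`). -/
def IsSemisimpleAlgebra (A : Type*) [NonUnitalRing A] [Module ℂ A]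
    [SMulCommClass ℂ A A] [IsScalarTower ℂ A A] : Prop :=
  ∀ a : A, (a : Unitization ℂ A) ∈ (⊥ : Ideal (Unitization ℂ A)).jacobson → a = 0

/-! Adjoin a unit, which preserves properness and makes the algebra integral over `ℂ`. Properness
kills selfadjoint nilpotents, so a real polynomial vanishing on the (finite, real) spectrum of a
selfadjoint `h` annihilates `h`, and Lagrange interpolation yields spectral projections and square
roots. Suppose `a* a` had an eigenvalue `-s < 0`, with spectral projection `e`. The compression
`e (a + a*) e` has a nonzero eigenvector `x = e x`, with eigenvalue `t` say, and
`((r + a) x)* ((r + a) x) = (r² + r t - s) x* x` vanishes for some real `r`. Hence `a x = -r x`, so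
that `-s x* x = x* a* a x = r² x* x`, which is absurd. Therefore the elements `a* a` are exactly the
selfadjoint elements with nonnegative spectrum. If `t < 0` and `-t + a* a = k²` then `k` is
invertible, and writing `b = y k` gives `t - (a* a + b* b) = -k (1 + y* y) k`, which is invertible:
the elements `a* a` are closed under sums. In the resulting order `1` is an Archimedean order unit,
and `σ a = min {c ≥ 0 | a* a ≤ c²}` is the required norm. -/

open Polynomial

section Spectrum

variable {K B : Type*} [Field K] [Ring B] [Algebra K B] {a : B} {z : K}

theorem exists_ne_zero_mul_eq_smul_of_isRoot_minpoly (ha : IsIntegral K a)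
    (hz : (minpoly K a).IsRoot z) : ∃ x : B, x ≠ 0 ∧ a * x = z • x := by
  obtain ⟨q, hq⟩ := dvd_iff_isRoot.2 hz
  have hqm : q.Monic := (monic_X_sub_C z).of_mul_monic_left (hq ▸ minpoly.monic ha)
  refine ⟨aeval a q, minpoly.aeval_ne_zero_of_dvdNotUnit_minpoly ha hqm
    ⟨hqm.ne_zero, X - C z, not_isUnit_X_sub_C z, by rw [hq, mul_comm]⟩, ?_⟩
  have h : (a - algebraMap K B z) * aeval a q = 0 := by
    simpa [hq] using minpoly.aeval K a
  rwa [sub_mul, sub_eq_zero, ← Algebra.smul_def] at h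

theorem mem_spectrum_of_mul_eq_smul {x : B} (hx : x ≠ 0) (h : a * x = z • x) :
    z ∈ spectrum K a := fun hu ↦
  hx <| hu.mul_right_eq_zero.1 <| by rw [sub_mul, h, Algebra.smul_def, sub_self]

theorem isRoot_minpoly_of_mem_spectrum (hz : z ∈ spectrum K a) : (minpoly K a).IsRoot z := by
  by_contra hne
  have h0 := spectrum.subset_polynomial_aeval a (minpoly K a) ⟨z, hz, rfl⟩
  rw [minpoly.aeval, spectrum.mem_iff, sub_zero] at h0
  exact h0 ((isUnit_iff_ne_zero.2 hne).map (algebraMap K B))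

theorem finite_spectrum_of_isIntegral {L : Type*} [Field L] [Algebra K L] [Algebra L B]
    [IsScalarTower K L B] (ha : IsIntegral L a) : (spectrum K a).Finite := by
  rw [← spectrum.preimage_algebraMap L]
  exact ((finite_setOfPred_isRoot (minpoly.ne_zero ha)).subset
    fun _ ↦ isRoot_minpoly_of_mem_spectrum).preimage (algebraMap K L).injective.injOn

theorem isNilpotent_aeval_of_forall_mem_spectrum [IsAlgClosed K] (ha : IsIntegral K a) {p : K[X]}
    (hp : ∀ z ∈ spectrum K a, p.eval z = 0) : IsNilpotent (aeval a p) := by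
  have hroots : ∀ z ∈ (minpoly K a).roots, X - C z ∣ p := fun z hz ↦ by
    obtain ⟨x, hx, h⟩ := exists_ne_zero_mul_eq_smul_of_isRoot_minpoly ha (isRoot_of_mem_roots hz)
    exact dvd_iff_isRoot.2 (hp z (mem_spectrum_of_mul_eq_smul hx h))
  have hdvd : minpoly K a ∣ p ^ (minpoly K a).roots.card := by
    rw [(IsAlgClosed.splits (minpoly K a)).eq_prod_roots_of_monic (minpoly.monic ha)]
    simpa using Multiset.prod_dvd_prod_of_dvd _ (fun _ ↦ p) hroots
  exact ⟨_, by rw [← map_pow, (minpoly.dvd_iff ..).1 hdvd]⟩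

theorem exists_polynomial_eval_eq {s : Set K} (hs : s.Finite) (f : K → K) :
    ∃ p : K[X], ∀ t ∈ s, p.eval t = f t := by
  classical
  exact ⟨Lagrange.interpolate hs.toFinset id f, fun t ht ↦
    Lagrange.eval_interpolate_at_node (v := id) f Function.injective_id.injOn
      (hs.mem_toFinset.2 ht)⟩

end Spectrum

theorem isSelfAdjoint_aeval {R B : Type*} [CommSemiring R] [StarRing R] [TrivialStar R]
    [Semiring B] [StarRing B] [Algebra R B] [StarModule R B] {h : B} (hh : IsSelfAdjoint h)
    (p : R[X]) : IsSelfAdjoint (aeval h p) := by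
  induction p using Polynomial.induction_on' with
  | add p q hp hq => simpa using hp.add hq
  | monomial n r =>
    rw [aeval_monomial, ← Algebra.smul_def]
    exact (IsSelfAdjoint.all r).smul (hh.pow n)

namespace HasProperInvolution

theorem im_eq_zero_of_mul_eq_smul {A : Type*} [NonUnitalRing A] [Module ℂ A]
    [SMulCommClass ℂ A A] [IsScalarTower ℂ A A] [StarRing A] [StarModule ℂ A]
    (hp : HasProperInvolution A) {h x : A} {z : ℂ} (hh : IsSelfAdjoint h) (hx : x ≠ 0)
    (hz : h * x = z • x) : z.im = 0 := by
  have hconj : star x * h = star z • star x := by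
    simpa [hh.star_eq] using congrArg star hz
  have hsmul : star z • (star x * x) = z • (star x * x) := by
    rw [← smul_mul_assoc, ← hconj, mul_assoc, hz, mul_smul_comm]
  exact Complex.conj_eq_iff_im.1 (smul_left_injective ℂ (fun h0 ↦ hx (hp x h0)) hsmul)

theorem eq_zero_of_isNilpotent {B : Type*} [Ring B] [StarRing B] (hp : HasProperInvolution B)
    {h : B} (hh : IsSelfAdjoint h) (hn : IsNilpotent h) : h = 0 := by
  have hpow : ∀ n : ℕ, h ^ 2 ^ n = 0 → h = 0 := fun n ↦ by
    induction n with
    | zero => simp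
    | succ n ih =>
      refine fun h0 ↦ ih (hp _ ?_)
      rwa [(hh.pow _).star_eq, ← sq, ← pow_mul, ← pow_succ]
  obtain ⟨n, hn⟩ := hn
  exact hpow n (pow_eq_zero_of_le n.lt_two_pow_self.le hn)

section Unital

variable {B : Type*} [Ring B] [StarRing B] [Algebra ℂ B] [StarModule ℂ B]

section SelfAdjoint

variable {h : B}

theorem aeval_eq_zero_of_forall_mem_spectrum (hp : HasProperInvolution B)
    (hh : IsSelfAdjoint h) (hi : IsIntegral ℂ h) {p : ℝ[X]}
    (hpz : ∀ t ∈ spectrum ℝ h, p.eval t = 0) : aeval h p = 0 := by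
  refine hp.eq_zero_of_isNilpotent (isSelfAdjoint_aeval hh p) ?_
  rw [← aeval_map_algebraMap ℂ h p]
  refine isNilpotent_aeval_of_forall_mem_spectrum hi fun z hz ↦ ?_
  obtain ⟨x, hx, hxz⟩ :=
    exists_ne_zero_mul_eq_smul_of_isRoot_minpoly hi (isRoot_minpoly_of_mem_spectrum hz)
  lift z to ℝ using hp.im_eq_zero_of_mul_eq_smul hh hx hxz
  rw [← Complex.coe_algebraMap, eval_map_algebraMap, aeval_algebraMap_apply, coe_aeval_eq_eval,
    hpz z ((spectrum.algebraMap_mem_iff ℂ).1 hz), map_zero]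

theorem eq_zero_of_spectrum_subset_singleton (hp : HasProperInvolution B)
    (hh : IsSelfAdjoint h) (hi : IsIntegral ℂ h) (hs : spectrum ℝ h ⊆ {0}) : h = 0 := by
  simpa using hp.aeval_eq_zero_of_forall_mem_spectrum hh hi (p := X) (by simpa using hs)

theorem exists_isSelfAdjoint_mul_self_eq (hp : HasProperInvolution B) (hh : IsSelfAdjoint h)
    (hi : IsIntegral ℂ h) (hs : ∀ t ∈ spectrum ℝ h, 0 ≤ t) :
    ∃ k : B, IsSelfAdjoint k ∧ k * k = h := by
  obtain ⟨p, hpf⟩ := exists_polynomial_eval_eq (finite_spectrum_of_isIntegral hi) Real.sqrt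
  refine ⟨aeval h p, isSelfAdjoint_aeval hh p, ?_⟩
  have hzero : aeval h (p * p - X) = 0 :=
    hp.aeval_eq_zero_of_forall_mem_spectrum hh hi fun t ht ↦ by
      simp [hpf t ht, Real.mul_self_sqrt (hs t ht)]
  simpa [sub_eq_zero] using hzero

theorem exists_isStarProjection_mul_eq_smul (hp : HasProperInvolution B) (hh : IsSelfAdjoint h)
    (hi : IsIntegral ℂ h) {t : ℝ} (ht : t ∈ spectrum ℝ h) :
    ∃ e : B, e ≠ 0 ∧ IsStarProjection e ∧ h * e = t • e := by
  classical
  obtain ⟨p, hpf⟩ := exists_polynomial_eval_eq (finite_spectrum_of_isIntegral hi)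
    (Pi.single t (1 : ℝ))
  have hidem : aeval h (p * p - p) = 0 :=
    hp.aeval_eq_zero_of_forall_mem_spectrum hh hi fun x hx ↦ by
      rcases eq_or_ne x t with rfl | hxt <;> simp [hpf x hx, *]
  have heigen : aeval h ((X - C t) * p) = 0 :=
    hp.aeval_eq_zero_of_forall_mem_spectrum hh hi fun x hx ↦ by
      rcases eq_or_ne x t with rfl | hxt <;> simp [hpf x hx, *]
  refine ⟨aeval h p, fun h0 ↦ ?_, ⟨?_, isSelfAdjoint_aeval hh p⟩, ?_⟩
  · have hone := spectrum.subset_polynomial_aeval h p ⟨t, ht, rfl⟩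
    simp [hpf t ht, h0, spectrum.mem_iff] at hone
  · simpa [sub_eq_zero, IsIdempotentElem] using hidem
  · simpa [sub_mul, sub_eq_zero, Algebra.smul_def] using heigen

theorem exists_mul_eq_smul_of_mul_eq_self (hp : HasProperInvolution B)
    (hh : IsSelfAdjoint h) (hi : IsIntegral ℂ h) {e : B} (he : IsIdempotentElem e) (he0 : e ≠ 0)
    (heh : e * h = h) : ∃ (t : ℝ) (x : B), x ≠ 0 ∧ e * x = x ∧ h * x = t • x := by
  by_cases hs : spectrum ℝ h ⊆ {0}
  · have h0 := hp.eq_zero_of_spectrum_subset_singleton hh hi hs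
    exact ⟨0, e, he0, he, by simp [h0]⟩
  · obtain ⟨t, ht, ht0⟩ := Set.not_subset.1 hs
    obtain ⟨x, hx0, -, hx⟩ := hp.exists_isStarProjection_mul_eq_smul hh hi ht
    have hxt : x = t⁻¹ • (h * x) := by rw [hx, inv_smul_smul₀ ht0]
    exact ⟨t, x, hx0, by rw [hxt, mul_smul_comm, ← mul_assoc, heh], hx⟩

end SelfAdjoint

theorem eq_zero_of_star_mul_self_mul_eq_neg_smul {A : Type*} [NonUnitalRing A] [Module ℝ A]
    [SMulCommClass ℝ A A] [IsScalarTower ℝ A A] [StarRing A] [StarModule ℝ A]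
    (hp : HasProperInvolution A) {a x : A} {s t : ℝ} (hs : 0 < s)
    (hneg : star x * (star a * a) * x = -s • (star x * x))
    (hsum : star x * (a + star a) * x = t • (star x * x)) : x = 0 := by
  obtain ⟨r, hr⟩ : ∃ r : ℝ, r * r + r * t - s = 0 := by
    refine ⟨(-t + √(t ^ 2 + 4 * s)) / 2, ?_⟩
    have hsqrt := Real.mul_self_sqrt (show 0 ≤ t ^ 2 + 4 * s by positivity)
    linarith
  have hax : a * x = -r • x := by
    have hexpand : star (r • x + a * x) * (r • x + a * x) =
        (r * r) • (star x * x) + r • (star x * (a + star a) * x) + star x * (star a * a) * x := by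
      simp only [star_add, star_smul, star_mul, star_trivial, add_mul, mul_add, smul_mul_assoc,
        mul_smul_comm, mul_assoc]
      module
    have hzero : r • x + a * x = 0 := hp _ <| by
      rw [hexpand, hsum, hneg, smul_smul, ← add_smul, ← add_smul, ← sub_eq_add_neg, hr, zero_smul]
    rw [neg_smul, eq_neg_of_add_eq_zero_right hzero]
  have hzero : (r * r + s) • (star x * x) = 0 := by
    have hsq : star x * (star a * a) * x = (r * r) • (star x * x) := by
      calc star x * (star a * a) * x = star (a * x) * (a * x) := by simp only [star_mul, mul_assoc]
        _ = (r * r) • (star x * x) := by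
          simp only [hax, star_smul, star_trivial, smul_mul_smul_comm, neg_mul_neg]
    rw [add_smul, ← hsq, hneg]
    module
  exact hp x ((smul_eq_zero.1 hzero).resolve_left
    (add_pos_of_nonneg_of_pos (mul_self_nonneg r) hs).ne')

section Integral

variable [Algebra.IsIntegral ℂ B]

theorem nonneg_of_mem_spectrum_star_mul_self (hp : HasProperInvolution B) {a : B} {t : ℝ}
    (ht : t ∈ spectrum ℝ (star a * a)) : 0 ≤ t := by
  by_contra! hneg
  obtain ⟨e, he0, he, hae⟩ := hp.exists_isStarProjection_mul_eq_smul (.star_mul_self a)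
    (Algebra.IsIntegral.isIntegral _) ht
  have hsa : IsSelfAdjoint (e * (a + star a) * e) := by
    simpa [he.isSelfAdjoint.star_eq] using (IsSelfAdjoint.add_star_self a).conjugate e
  obtain ⟨r, x, hx0, hex, hx⟩ := hp.exists_mul_eq_smul_of_mul_eq_self hsa
    (Algebra.IsIntegral.isIntegral _) he.isIdempotentElem he0
    (by simp only [← mul_assoc, he.isIdempotentElem.eq])
  have hxe : star x * e = star x := by
    simpa [he.isSelfAdjoint.star_eq] using congrArg star hex
  refine hx0 (hp.eq_zero_of_star_mul_self_mul_eq_neg_smul (a := a) (t := r) (neg_pos.2 hneg) ?_ ?_)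
  · rw [neg_neg, mul_assoc, ← hex, ← mul_assoc _ e x, hae, smul_mul_assoc, mul_smul_comm]
  · calc star x * (a + star a) * x = star x * e * (a + star a) * (e * x) := by rw [hxe, hex]
      _ = star x * (e * (a + star a) * e * x) := by simp only [mul_assoc]
      _ = r • (star x * x) := by rw [hx, mul_smul_comm]

theorem isUnit_algebraMap_add_star_mul_self (hp : HasProperInvolution B) (a : B) {s : ℝ}
    (hs : 0 < s) : IsUnit (algebraMap ℝ B s + star a * a) := by
  have hmem : -s ∉ spectrum ℝ (star a * a) := fun h ↦
    hs.not_ge (neg_nonneg.1 (hp.nonneg_of_mem_spectrum_star_mul_self h))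
  rwa [spectrum.mem_iff, not_not, map_neg, ← neg_add', IsUnit.neg_iff] at hmem

theorem nonneg_of_mem_spectrum_star_mul_self_add (hp : HasProperInvolution B) {a b : B} {t : ℝ}
    (ht : t ∈ spectrum ℝ (star a * a + star b * b)) : 0 ≤ t := by
  by_contra! hneg
  obtain ⟨k, hk, hkk⟩ : ∃ k : B, IsSelfAdjoint k ∧ k * k = algebraMap ℝ B (-t) + star a * a := by
    refine hp.exists_isSelfAdjoint_mul_self_eq
      (((IsSelfAdjoint.all (-t)).algebraMap B).add (.star_mul_self a))
      (Algebra.IsIntegral.isIntegral _) fun x hx ↦ ?_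
    rw [← spectrum.vadd_eq] at hx
    obtain ⟨y, hy, rfl⟩ := hx
    exact add_nonneg (neg_pos.2 hneg).le (hp.nonneg_of_mem_spectrum_star_mul_self hy)
  have hku : IsUnit k := by
    rw [← isUnit_pow_iff two_ne_zero, sq, hkk]
    exact hp.isUnit_algebraMap_add_star_mul_self a (neg_pos.2 hneg)
  obtain ⟨y, rfl⟩ : ∃ y, b = y * k := ⟨b * ↑hku.unit⁻¹, by rw [mul_assoc, hku.val_inv_mul, mul_one]⟩
  have hfactor : algebraMap ℝ B t - (star a * a + star (y * k) * (y * k)) =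
      -(k * (algebraMap ℝ B 1 + star y * y) * k) := by
    simp only [star_mul, hk.star_eq, map_one, mul_add, add_mul, mul_one, hkk, map_neg, mul_assoc]
    abel
  refine spectrum.mem_iff.1 ht ?_
  rw [hfactor]
  exact ((hku.mul (hp.isUnit_algebraMap_add_star_mul_self y one_pos)).mul hku).neg

theorem mem_closure_star_mul_self_iff (hp : HasProperInvolution B) {h : B} :
    h ∈ AddSubmonoid.closure (Set.range fun a : B ↦ star a * a) ↔
      IsSelfAdjoint h ∧ ∀ t ∈ spectrum ℝ h, 0 ≤ t := by
  constructor
  · intro hh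
    obtain ⟨a, rfl⟩ : ∃ a, star a * a = h := by
      induction hh using AddSubmonoid.closure_induction with
      | mem _ hx => exact hx
      | zero => exact ⟨0, by simp⟩
      | add x y _ _ hx hy =>
        obtain ⟨a, rfl⟩ := hx
        obtain ⟨b, rfl⟩ := hy
        obtain ⟨k, hk, hkk⟩ := hp.exists_isSelfAdjoint_mul_self_eq
          ((IsSelfAdjoint.star_mul_self a).add (.star_mul_self b))
          (Algebra.IsIntegral.isIntegral _)
          fun _ ↦ hp.nonneg_of_mem_spectrum_star_mul_self_add
        exact ⟨k, by rw [hk.star_eq, hkk]⟩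
    exact ⟨.star_mul_self a, fun _ ↦ hp.nonneg_of_mem_spectrum_star_mul_self⟩
  · rintro ⟨hh, hs⟩
    obtain ⟨k, hk, hkk⟩ :=
      hp.exists_isSelfAdjoint_mul_self_eq hh (Algebra.IsIntegral.isIntegral h) hs
    exact AddSubmonoid.subset_closure ⟨k, by simp only [hk.star_eq, hkk]⟩

/-- The cone of sums of elements `star a * a`; its order makes `B` a star-ordered ring. -/
def positiveCone (hp : HasProperInvolution B) : AddGroupCone B where
  toAddSubmonoid := AddSubmonoid.closure (Set.range fun a : B ↦ star a * a)
  eq_zero_of_mem_of_neg_mem' {h} hpos hneg := by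
    obtain ⟨hh, hs⟩ := hp.mem_closure_star_mul_self_iff.1 hpos
    obtain ⟨-, hs'⟩ := hp.mem_closure_star_mul_self_iff.1 hneg
    refine hp.eq_zero_of_spectrum_subset_singleton hh (Algebra.IsIntegral.isIntegral h)
      fun t ht ↦ le_antisymm ?_ (hs t ht)
    exact neg_nonneg.1 (hs' (-t) (by rwa [← spectrum.neg_eq, Set.neg_mem_neg]))

theorem starOrderedRing_positiveCone (hp : HasProperInvolution B) :
    letI := PartialOrder.mkOfAddGroupCone hp.positiveCone
    StarOrderedRing B :=
  letI := PartialOrder.mkOfAddGroupCone hp.positiveCone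
  haveI := IsOrderedAddMonoid.mkOfCone hp.positiveCone
  .of_nonneg_iff (fun hxy z ↦ by gcongr) fun x ↦ by
    rw [PartialOrder.mkOfAddGroupCone_le_iff, sub_zero]; rfl

theorem le_smul_one_iff [PartialOrder B] [StarOrderedRing B] (hp : HasProperInvolution B) {h : B}
    {c : ℝ} : h ≤ c • (1 : B) ↔ IsSelfAdjoint h ∧ ∀ t ∈ spectrum ℝ h, t ≤ c := by
  have hsa : IsSelfAdjoint (algebraMap ℝ B c - h) ↔ IsSelfAdjoint h := by
    have hc : IsSelfAdjoint (algebraMap ℝ B c) := (IsSelfAdjoint.all c).algebraMap B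
    exact ⟨fun hd ↦ by simpa using hc.sub hd, hc.sub⟩
  rw [← Algebra.algebraMap_eq_smul_one, ← sub_nonneg, StarOrderedRing.nonneg_iff,
    hp.mem_closure_star_mul_self_iff, hsa, ← spectrum.singleton_sub_eq]
  simp

end Integral

end Unital

end HasProperInvolution

section StarUnitBall

open Bornology Pointwise

/-- The would-be closed unit ball of a pre-C*-norm: its Minkowski gauge is the norm we want. -/
def starUnitBall (B : Type*) [Mul B] [One B] [Star B] [LE B] : Set B := {a | star a * a ≤ 1}

/-- `σ` is the norm determined by the order: `σ a` is the least `c ≥ 0` with `a* a ≤ c²`. -/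
def IsOrderNorm {B : Type*} [Mul B] [One B] [Star B] [LE B] [SMul ℝ B] (σ : B → ℝ) : Prop :=
  ∀ a : B, IsLeast {c : ℝ | 0 ≤ c ∧ star a * a ≤ c ^ 2 • (1 : B)} (σ a)

section Real

variable {B : Type*} [Ring B] [PartialOrder B] [StarRing B] [StarOrderedRing B] [Algebra ℝ B]
  [StarModule ℝ B]

theorem mem_smul_starUnitBall_iff {c : ℝ} (hc : c ≠ 0) {a : B} :
    a ∈ c • starUnitBall B ↔ star a * a ≤ c ^ 2 • (1 : B) := by
  rw [Set.mem_smul_set_iff_inv_smul_mem₀ hc, starUnitBall, Set.mem_ofPred_eq, star_smul,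
    star_trivial, smul_mul_smul_comm, ← sq, inv_pow, inv_smul_le_iff_of_pos (by positivity)]

theorem convex_starUnitBall : Convex ℝ (starUnitBall B) := by
  intro a ha b hb s t hs ht hst
  obtain rfl : t = 1 - s := eq_sub_of_add_eq' hst
  calc star (s • a + (1 - s) • b) * (s • a + (1 - s) • b)
      = s • (star a * a) + (1 - s) • (star b * b) -
          (s * (1 - s)) • (star (a - b) * (a - b)) := by
        simp only [star_add, star_sub, star_smul, star_trivial, add_mul, mul_add, sub_mul, mul_sub,
          smul_mul_smul_comm]
        module
    _ ≤ s • (star a * a) + (1 - s) • (star b * b) :=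
        sub_le_self _ (smul_nonneg (mul_nonneg hs ht) (star_mul_self_nonneg _))
    _ ≤ s • 1 + (1 - s) • 1 :=
        add_le_add (smul_le_smul_of_nonneg_left ha hs) (smul_le_smul_of_nonneg_left hb ht)
    _ = 1 := by rw [← add_smul, hst, one_smul]

theorem absorbent_starUnitBall (hunit : ∀ a : B, ∃ c : ℝ, star a * a ≤ c • (1 : B)) :
    Absorbent ℝ (starUnitBall B) := fun a ↦ by
  obtain ⟨d, hd⟩ := hunit a
  filter_upwards [eventually_cobounded_le_norm (max 1 d)] with c hc
  obtain ⟨hc1, hcd⟩ := max_le_iff.1 hc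
  rw [Set.singleton_subset_iff, mem_smul_starUnitBall_iff (norm_pos_iff.1 (one_pos.trans_le hc1))]
  refine hd.trans (smul_le_smul_of_nonneg_right ?_ zero_le_one)
  calc d ≤ ‖c‖ := hcd
    _ ≤ ‖c‖ ^ 2 := le_self_pow₀ hc1 two_ne_zero
    _ = c ^ 2 := by rw [Real.norm_eq_abs, sq_abs]

theorem gauge_starUnitBall_le_iff (hunit : ∀ a : B, ∃ c : ℝ, star a * a ≤ c • (1 : B))
    (harch : ∀ a : B, (∀ ε : ℝ, 0 < ε → a ≤ ε • (1 : B)) → a ≤ 0) {a : B} {c : ℝ} (hc : 0 ≤ c) :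
    gauge (starUnitBall B) a ≤ c ↔ star a * a ≤ c ^ 2 • (1 : B) := by
  have hgauge : gauge (starUnitBall B) a ≤ c ↔ ∀ r > c, a ∈ r • starUnitBall B := by
    have hzero : (0 : B) ∈ starUnitBall B := by simp [starUnitBall]
    rw [← Set.mem_ofPred_eq (p := fun x ↦ gauge (starUnitBall B) x ≤ c), setOfPred_gauge_le_eq
      convex_starUnitBall hzero (absorbent_starUnitBall hunit) hc, Set.mem_iInter₂]
  rw [hgauge]
  constructor
  · refine fun h ↦ sub_nonpos.1 (harch _ fun ε hε ↦ sub_le_iff_le_add'.2 ?_)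
    have hlt : c < √(c ^ 2 + ε) := Real.lt_sqrt_of_sq_lt (lt_add_of_pos_right _ hε)
    have hmem := (mem_smul_starUnitBall_iff (hc.trans_lt hlt).ne').1 (h _ hlt)
    rwa [Real.sq_sqrt (by positivity), add_smul] at hmem
  · refine fun h r hr ↦ (mem_smul_starUnitBall_iff (hc.trans_lt hr).ne').2 (h.trans ?_)
    exact smul_le_smul_of_nonneg_right (by gcongr) zero_le_one

theorem isOrderNorm_gauge_starUnitBall (hunit : ∀ a : B, ∃ c : ℝ, star a * a ≤ c • (1 : B))
    (harch : ∀ a : B, (∀ ε : ℝ, 0 < ε → a ≤ ε • (1 : B)) → a ≤ 0) :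
    IsOrderNorm (gauge (starUnitBall B)) := fun a ↦
  ⟨⟨gauge_nonneg a, (gauge_starUnitBall_le_iff hunit harch (gauge_nonneg a)).1 le_rfl⟩,
    fun _ ⟨hc, hle⟩ ↦ (gauge_starUnitBall_le_iff hunit harch hc).2 hle⟩

theorem le_smul_one_of_mul_self_le {h : B} (hh : IsSelfAdjoint h) {c : ℝ}
    (hc : 0 < c) (hle : h * h ≤ c ^ 2 • (1 : B)) : h ≤ c • (1 : B) := by
  have hsa : IsSelfAdjoint (c • (1 : B) - h) := ((IsSelfAdjoint.all c).smul (.one B)).sub hh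
  have hsq : 0 ≤ c ^ 2 • (1 : B) - (2 * c) • h + h * h := by
    convert hsa.mul_self_nonneg using 1
    simp only [sub_mul, mul_sub, smul_one_mul, mul_smul_one]
    module
  have htwo : (2 * c) • h ≤ (2 * c) • c • (1 : B) := by
    calc (2 * c) • h ≤ c ^ 2 • (1 : B) + h * h := by
          rwa [← sub_nonneg, add_sub_right_comm]
      _ ≤ c ^ 2 • (1 : B) + c ^ 2 • (1 : B) := by gcongr
      _ = (2 * c) • c • (1 : B) := by module
  exact (smul_le_smul_iff_of_pos_left (by positivity)).1 htwo

namespace IsOrderNorm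

variable {σ : B → ℝ}

theorem mul_le (hσ : IsOrderNorm σ) (a b : B) : σ (a * b) ≤ σ a * σ b := by
  refine (hσ (a * b)).2 ⟨mul_nonneg (hσ a).1.1 (hσ b).1.1, ?_⟩
  calc star (a * b) * (a * b) = star b * (star a * a) * b := by simp only [star_mul, mul_assoc]
    _ ≤ star b * (σ a ^ 2 • 1) * b := star_left_conjugate_le_conjugate (hσ a).1.2 b
    _ = σ a ^ 2 • (star b * b) := by rw [mul_smul_one, smul_mul_assoc]
    _ ≤ σ a ^ 2 • σ b ^ 2 • (1 : B) := smul_le_smul_of_nonneg_left (hσ b).1.2 (sq_nonneg _)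
    _ = (σ a * σ b) ^ 2 • (1 : B) := by rw [smul_smul, mul_pow]

theorem sq_le_star_mul_self (hσ : IsOrderNorm σ) (a : B) : σ a ^ 2 ≤ σ (star a * a) := by
  refine le_of_forall_gt_imp_ge_of_dense fun c hc ↦ ?_
  obtain ⟨hσ0, hsq⟩ := (hσ (star a * a)).1
  have hc0 : 0 < c := hσ0.trans_lt hc
  rw [(IsSelfAdjoint.star_mul_self a).star_eq] at hsq
  have hle : star a * a ≤ c • (1 : B) := le_smul_one_of_mul_self_le (.star_mul_self a) hc0 <|
    hsq.trans (smul_le_smul_of_nonneg_right (by gcongr) zero_le_one)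
  refine (Real.le_sqrt (hσ a).1.1 hc0.le).1 ((hσ a).2 ⟨c.sqrt_nonneg, ?_⟩)
  rwa [Real.sq_sqrt hc0.le]

theorem le_star (hσ : IsOrderNorm σ) (a : B) : σ a ≤ σ (star a) := by
  by_contra! hlt
  have hle := (hσ.sq_le_star_mul_self a).trans (hσ.mul_le (star a) a)
  exact hlt.not_ge (le_of_mul_le_mul_right (sq (σ a) ▸ hle) ((hσ _).1.1.trans_lt hlt))

theorem star_mul_self (hσ : IsOrderNorm σ) (a : B) : σ (star a * a) = σ a ^ 2 := by
  refine le_antisymm ?_ (hσ.sq_le_star_mul_self a)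
  have hstar : σ (star a) ≤ σ a := by simpa using hσ.le_star (star a)
  calc σ (star a * a) ≤ σ (star a) * σ a := hσ.mul_le (star a) a
    _ ≤ σ a * σ a := mul_le_mul_of_nonneg_right hstar (hσ a).1.1
    _ = σ a ^ 2 := (sq (σ a)).symm

end IsOrderNorm

end Real

section Complex

variable {B : Type*} [Ring B] [PartialOrder B] [StarRing B] [StarOrderedRing B] [Algebra ℂ B]
  [StarModule ℂ B]

theorem balanced_starUnitBall : Balanced ℂ (starUnitBall B) := by
  refine balanced_iff_smul_mem.2 fun c hc a ha ↦ ?_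
  calc star (c • a) * (c • a) = Complex.normSq c • (star a * a) := by
        rw [star_smul, smul_mul_smul_comm, Complex.star_def, ← Complex.normSq_eq_conj_mul_self,
          Complex.coe_smul]
    _ ≤ (1 : ℝ) • (star a * a) := by
        refine smul_le_smul_of_nonneg_right ?_ (star_mul_self_nonneg a)
        exact Complex.normSq_eq_norm_sq c ▸ pow_le_one₀ (norm_nonneg c) hc
    _ ≤ 1 := (one_smul ℝ (star a * a)).trans_le ha

theorem HasProperInvolution.hasPreCstarNorm_of_starOrderedRing (hp : HasProperInvolution B)
    (hunit : ∀ a : B, ∃ c : ℝ, star a * a ≤ c • (1 : B))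
    (harch : ∀ a : B, (∀ ε : ℝ, 0 < ε → a ≤ ε • (1 : B)) → a ≤ 0) : HasPreCstarNorm B := by
  let σ : Seminorm ℂ B :=
    gaugeSeminorm balanced_starUnitBall convex_starUnitBall (absorbent_starUnitBall hunit)
  have hσ : IsOrderNorm σ := isOrderNorm_gauge_starUnitBall hunit harch
  refine ⟨σ, fun a ↦ ⟨fun h ↦ hp a ?_, fun h ↦ by rw [h, map_zero]⟩, map_smul_eq_mul σ,
    map_add_le_add σ, hσ.mul_le, hσ.star_mul_self⟩
  exact le_antisymm (by simpa [h] using (hσ a).1.2) (star_mul_self_nonneg a)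

end Complex

end StarUnitBall

theorem HasProperInvolution.hasPreCstarNorm_of_isIntegral {B : Type*} [Ring B] [StarRing B]
    [Algebra ℂ B] [StarModule ℂ B] [Algebra.IsIntegral ℂ B] (hp : HasProperInvolution B) :
    HasPreCstarNorm B := by
  let := PartialOrder.mkOfAddGroupCone hp.positiveCone
  have := hp.starOrderedRing_positiveCone
  refine hp.hasPreCstarNorm_of_starOrderedRing (fun a ↦ ?_) fun a ha ↦ ?_
  · obtain ⟨c, hc⟩ := (finite_spectrum_of_isIntegral (K := ℝ)
      (Algebra.IsIntegral.isIntegral (R := ℂ) (star a * a))).bddAbove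
    exact ⟨c, hp.le_smul_one_iff.2 ⟨.star_mul_self a, hc⟩⟩
  · rw [← zero_smul ℝ (1 : B), hp.le_smul_one_iff]
    refine ⟨(hp.le_smul_one_iff.1 (ha 1 one_pos)).1, fun t ht ↦ ?_⟩
    exact le_of_forall_gt_imp_ge_of_dense fun ε hε ↦ (hp.le_smul_one_iff.1 (ha ε hε)).2 t ht

theorem HasPreCstarNorm.hasProperInvolution {A : Type*} [NonUnitalRing A] [Module ℂ A] [Star A] :
    HasPreCstarNorm A → HasProperInvolution A := by
  rintro ⟨σ, hzero, -, -, -, hstar⟩ a ha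
  have hsq : σ a ^ 2 = 0 := by rw [← hstar, ha, (hzero 0).2 rfl]
  exact (hzero a).1 (pow_eq_zero_iff two_ne_zero |>.1 hsq)

theorem HasPreCstarNorm.of_injective {A B : Type*} [NonUnitalRing A] [Module ℂ A] [Star A]
    [NonUnitalRing B] [Module ℂ B] [Star B] (φ : A →⋆ₙₐ[ℂ] B) (hφ : Function.Injective φ) :
    HasPreCstarNorm B → HasPreCstarNorm A := by
  rintro ⟨σ, hzero, hsmul, hadd, hmul, hstar⟩
  refine ⟨σ ∘ φ, fun a ↦ ?_, fun c a ↦ ?_, fun a b ↦ ?_, fun a b ↦ ?_, fun a ↦ ?_⟩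
  · exact (hzero (φ a)).trans (map_eq_zero_iff φ hφ)
  · simpa using hsmul c (φ a)
  · simpa using hadd (φ a) (φ b)
  · simpa using hmul (φ a) (φ b)
  · simpa [map_star] using hstar (φ a)

theorem HasProperInvolution.unitization {R A : Type*} [CommRing R] [NoZeroDivisors R] [StarRing R]
    [NonUnitalRing A] [Module R A] [SMulCommClass R A A] [IsScalarTower R A A] [StarRing A]
    (hp : HasProperInvolution A) : HasProperInvolution (Unitization R A) := by
  intro x hx
  induction x using Unitization.ind with
  | inl_add_inr z a =>
    obtain rfl : z = 0 := by simpa using congrArg (·.fst) hx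
    obtain rfl : a = 0 := hp a (by simpa using congrArg (·.snd) hx)
    simp

theorem IsAlgebraicAlgebra.isIntegral_unitization {A : Type*} [NonUnitalRing A] [Module ℂ A]
    [SMulCommClass ℂ A A] [IsScalarTower ℂ A A] (halg : IsAlgebraicAlgebra A) :
    Algebra.IsIntegral ℂ (Unitization ℂ A) := by
  refine ⟨fun x ↦ ?_⟩
  induction x using Unitization.ind with
  | inl_add_inr z a =>
    obtain ⟨S, ha, hS⟩ := halg a
    have : Module.Finite ℂ (Unitization ℂ S) := .equiv (Unitization.linearEquiv ℂ ℂ S).symm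
    let φ : Unitization ℂ S →ₐ[ℂ] Unitization ℂ A := Unitization.lift
      ((Unitization.inrNonUnitalAlgHom ℂ A).comp (NonUnitalSubalgebraClass.subtype S))
    have hφ : φ (.inl z + .inr ⟨a, ha⟩) = .inl z + .inr a := by
      ext <;> simp [φ, Unitization.algebraMap_eq_inl]
    exact hφ ▸ (IsIntegral.of_finite ℂ _).map φ

/-- An algebraic complex `*`-algebra admits a pre-C*-norm iff its
involution is proper. -/
theorem hasPreCstarNorm_iff_properInvolution (A : Type*) [NonUnitalRing A] [Module ℂ A]
    [SMulCommClass ℂ A A] [IsScalarTower ℂ A A] [StarRing A] [StarModule ℂ A]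
    (halg : IsAlgebraicAlgebra A) :
    HasPreCstarNorm A ↔ HasProperInvolution A := by
  refine ⟨HasPreCstarNorm.hasProperInvolution, fun hp ↦ ?_⟩
  have hunitization : HasPreCstarNorm (Unitization ℂ A) :=
    have := halg.isIntegral_unitization
    hp.unitization.hasPreCstarNorm_of_isIntegral
  exact hunitization.of_injective (Unitization.inrNonUnitalStarAlgHom ℂ A)
    Unitization.inr_injective
end

section
/- Every complex Banach algebra that is algebraic and semisimple is finite dimensional. -/
/-- A possibly non-unital ring has no infinite set of orthogonal idempotents (such unital rings are
also called *I-finite*). This finiteness condition makes sets of idempotents have maximal elements;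
it is encoded by requiring every sequence of pairwise orthogonal idempotents to contain `0`. -/
def IsOrthogonallyFinite (R : Type*) [Mul R] [Zero R] : Prop :=
  ∀ e : ℕ → R, (∀ n, IsIdempotentElem (e n)) → Pairwise (fun m n => e m * e n = 0) → ∃ n, e n = 0

namespace IsOrthogonallyFinite

section Maximal

variable {R : Type*} [NonUnitalRing R]

theorem exists_succ_eq (hR : IsOrthogonallyFinite R) {e : ℕ → R}
    (he : ∀ n, IsIdempotentElem (e n)) (hleft : ∀ n, e n * e (n + 1) = e n)
    (hright : ∀ n, e (n + 1) * e n = e n) : ∃ n, e (n + 1) = e n := by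
  have hle : ∀ m n, m ≤ n → e m * e n = e m ∧ e n * e m = e m := fun m n hmn => by
    induction n, hmn using Nat.le_induction with
    | base => exact ⟨he m, he m⟩
    | succ n _ ih =>
      constructor
      · rw [← ih.1, mul_assoc, hleft]
      · rw [← ih.2, ← mul_assoc, hright]
  have hortho : ∀ m n, m < n → (e (m + 1) - e m) * (e (n + 1) - e n) = 0 ∧
      (e (n + 1) - e n) * (e (m + 1) - e m) = 0 := fun m n hmn => by
    simp only [mul_sub, sub_mul, hle (m + 1) (n + 1) (by lia), hle (m + 1) n (by lia),
      hle m (n + 1) (by lia), hle m n (by lia), sub_self, and_self]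
  obtain ⟨n, hn⟩ := hR (fun n => e (n + 1) - e n)
    (fun n => (he n).sub (he (n + 1)) (hleft n) (hright n))
    (fun m n hmn => hmn.lt_or_gt.elim (fun h => (hortho m n h).1) (fun h => (hortho n m h).2))
  exact ⟨n, sub_eq_zero.1 hn⟩

theorem exists_maximal (hR : IsOrthogonallyFinite R) {s : Set R} (hne : s.Nonempty)
    (hs : ∀ e ∈ s, IsIdempotentElem e) :
    ∃ e ∈ s, ∀ f ∈ s, e * f = e → f * e = e → f = e := by
  have hwf : WellFounded fun f e : s => e.1 * f = e ∧ f.1 * e = e ∧ f ≠ e := by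
    refine wellFounded_iff_isEmpty_descending_chain.2 ⟨fun ⟨e, he⟩ => ?_⟩
    obtain ⟨n, hn⟩ := hR.exists_succ_eq (e := fun n => (e n : R)) (fun n => hs _ (e n).2)
      (fun n => (he n).1) (fun n => (he n).2.1)
    exact (he n).2.2 (Subtype.ext hn)
  have : Nonempty s := hne.to_subtype
  obtain ⟨e, -, hmax⟩ := hwf.has_min Set.univ Set.univ_nonempty
  refine ⟨e, e.2, fun f hf hef hfe => ?_⟩
  by_contra hfe_ne
  exact hmax ⟨f, hf⟩ trivial ⟨hef, hfe, fun h => hfe_ne (congrArg Subtype.val h)⟩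

end Maximal

theorem unitization {R A : Type*} [CommRing R] [NoZeroDivisors R] [NonUnitalRing A]
    [Module R A] (hA : IsOrthogonallyFinite A) : IsOrthogonallyFinite (Unitization R A) := by
  intro e he hortho
  obtain ⟨N, hN⟩ : ∃ N, ∀ n, N ≤ n → (e n).fst = 0 := by
    by_cases hfst : ∃ m, (e m).fst ≠ 0
    · obtain ⟨m, hm⟩ := hfst
      refine ⟨m + 1, fun n hn => ?_⟩
      have hmn : (e m).fst * (e n).fst = 0 := by
        rw [← Unitization.fst_mul, hortho (by lia), Unitization.fst_zero]
      exact (mul_eq_zero.1 hmn).resolve_left hm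
    · exact ⟨0, fun n _ => not_not.1 (not_exists.1 hfst n)⟩
  have hinr : ∀ n, e (n + N) = ((e (n + N)).snd : Unitization R A) := fun n =>
    Unitization.ext (hN _ (by lia)) rfl
  obtain ⟨n, hn⟩ := hA (fun n => (e (n + N)).snd)
    (fun n => Unitization.inr_injective (R := R) <| by
      rw [Unitization.inr_mul, ← hinr, (he _).eq])
    (fun m n hmn => Unitization.inr_injective (R := R) <| by
      rw [Unitization.inr_mul, ← hinr, ← hinr, hortho (by lia), Unitization.inr_zero])
  exact ⟨n + N, by rw [hinr, hn, Unitization.inr_zero]⟩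

end IsOrthogonallyFinite

-- `1 - (e + f - e * f) = (1 - e) * (1 - f)`
theorem isIdempotentElem_add_sub_mul {R : Type*} [NonUnitalRing R] {e f : R}
    (he : IsIdempotentElem e) (hf : IsIdempotentElem f) (hfe : f * e = 0) :
    IsIdempotentElem (e + f - e * f) := by
  have hfef : f * (e * f) = 0 := by rw [← mul_assoc, hfe, zero_mul]
  have heef : e * (e * f) = e * f := by rw [← mul_assoc, he.eq]
  simp only [IsIdempotentElem, mul_add, mul_sub, add_mul, sub_mul, mul_assoc, he.eq, hf.eq, hfe,
    hfef, heef]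
  abel

section LeftIdeals

variable {R : Type*} [Ring R]

theorem le_jacobson_of_forall_isNilpotent {L : Ideal R} (hL : ∀ a ∈ L, IsNilpotent a) :
    L ≤ Ring.jacobson R := by
  intro x hx
  rw [← Ideal.jacobson_bot, Ideal.mem_jacobson_iff]
  intro y
  obtain ⟨u, hu⟩ := (hL (y * x) (L.mul_mem_left y hx)).isUnit_add_one
  refine ⟨(u⁻¹ : Rˣ), ?_⟩
  rw [Ideal.mem_bot, mul_assoc, ← mul_add_one, ← hu, Units.inv_mul, sub_self]

theorem isCompl_ker_toSpanSingleton {L : Ideal R} {e : R} (heL : e ∈ L)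
    (hLe : ∀ x ∈ L, x * e = x) : IsCompl L (LinearMap.ker (LinearMap.toSpanSingleton R R e)) := by
  let mulRight : R →ₗ[R] L :=
    (LinearMap.toSpanSingleton R R e).codRestrict L fun x => L.mul_mem_left x heL
  have hcompl : IsCompl L (LinearMap.ker mulRight) :=
    LinearMap.isCompl_of_proj fun x => Subtype.ext (hLe x x.2)
  have hker : LinearMap.ker mulRight = LinearMap.ker (LinearMap.toSpanSingleton R R e) :=
    LinearMap.ker_codRestrict ..
  rwa [hker] at hcompl

theorem exists_mem_forall_mul_eq_self (hR : IsOrthogonallyFinite R)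
    (hidem : ∀ L : Ideal R, L ≠ ⊥ → ∃ e ∈ L, IsIdempotentElem e ∧ e ≠ 0) (L : Ideal R) :
    ∃ e ∈ L, ∀ x ∈ L, x * e = x := by
  obtain ⟨e, ⟨heL, he⟩, hmax⟩ := hR.exists_maximal (s := {e | e ∈ L ∧ IsIdempotentElem e})
    ⟨0, L.zero_mem, .zero⟩ fun e he => he.2
  refine ⟨e, heL, fun x hx => ?_⟩
  by_contra hxe
  let M : Ideal R := L ⊓ LinearMap.ker (LinearMap.toSpanSingleton R R e)
  have hM : M ≠ ⊥ := by
    have hxM : x - x * e ∈ M :=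
      ⟨L.sub_mem hx (L.mul_mem_left x heL), by simp [sub_mul, mul_assoc, he.eq]⟩
    exact (Submodule.ne_bot_iff M).2 ⟨_, hxM, sub_ne_zero.2 (Ne.symm hxe)⟩
  obtain ⟨f, ⟨hfL, hfe⟩, hf, hf0⟩ := hidem M hM
  replace hfe : f * e = 0 := by simpa using hfe
  let g := e + f - e * f
  have hgL : g ∈ L := L.sub_mem (L.add_mem heL hfL) (L.mul_mem_left e hfL)
  have heg : e * g = e := by simp [g, mul_sub, mul_add, ← mul_assoc, he.eq]
  have hge : g * e = e := by simp [g, sub_mul, add_mul, mul_assoc, he.eq, hfe]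
  have hg_eq : g = e := hmax g ⟨hgL, isIdempotentElem_add_sub_mul he hf hfe⟩ heg hge
  have hef : e * f = f := by simpa [g, add_sub_assoc, sub_eq_zero, eq_comm] using hg_eq
  exact hf0 (by rw [← hf.eq, ← hef, mul_assoc, ← mul_assoc f, hfe, zero_mul, mul_zero])

theorem isSemisimpleRing_of_isOrthogonallyFinite (hR : IsOrthogonallyFinite R)
    (hidem : ∀ L : Ideal R, L ≠ ⊥ → ∃ e ∈ L, IsIdempotentElem e ∧ e ≠ 0) :
    IsSemisimpleRing R := by
  refine (isSemisimpleModule_iff R R).2 ⟨fun L => ?_⟩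
  obtain ⟨e, heL, hLe⟩ := exists_mem_forall_mul_eq_self hR hidem L
  exact ⟨_, isCompl_ker_toSpanSingleton heL hLe⟩

end LeftIdeals

section Algebraic

variable {K R : Type*} [Field K] [Ring R] [Algebra K R]

open Polynomial in
theorem exists_isIdempotentElem_mul_of_isAlgebraic {a : R} (ha : IsAlgebraic K a)
    (hnil : ¬ IsNilpotent a) : ∃ b, IsIdempotentElem (b * a) ∧ b * a ≠ 0 := by
  obtain ⟨p, hp, hpa⟩ := ha
  obtain ⟨q, hq, hdvd⟩ := p.exists_eq_pow_rootMultiplicity_mul_and_not_dvd hp 0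
  set k := p.rootMultiplicity 0
  rw [C_0, sub_zero] at hq hdvd
  obtain ⟨u, v, huv⟩ : IsCoprime (X ^ (k + 1)) q :=
    (prime_X.irreducible.coprime_iff_not_dvd.2 hdvd).pow_left
  have hmul : aeval a (u * X ^ k) * a = aeval a (u * X ^ (k + 1)) := by
    rw [pow_succ, ← mul_assoc, map_mul _ _ X, aeval_X]
  refine ⟨aeval a (u * X ^ k), ?_, fun hzero => hnil ⟨k, ?_⟩⟩
  · have hidem : u * X ^ (k + 1) * (u * X ^ (k + 1)) = u * X ^ (k + 1) - u * v * X * p := by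
      rw [hq]
      linear_combination (u * X ^ (k + 1)) * huv
    rw [hmul, IsIdempotentElem, ← map_mul, hidem, map_sub, map_mul _ _ p, hpa, mul_zero, sub_zero]
  · have hpow : (X : K[X]) ^ k = X ^ k * (u * X ^ (k + 1)) + v * p := by
      rw [hq]
      linear_combination (-X ^ k) * huv
    rw [← aeval_X_pow (R := K) a, hpow, map_add, map_mul _ (X ^ k), map_mul _ v, ← hmul, hzero,
      hpa, mul_zero, mul_zero, add_zero]

theorem exists_mem_isIdempotentElem_ne_zero [Algebra.IsAlgebraic K R] (hJ : Ring.jacobson R = ⊥)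
    {L : Ideal R} (hL : L ≠ ⊥) : ∃ e ∈ L, IsIdempotentElem e ∧ e ≠ 0 := by
  obtain ⟨a, haL, hnil⟩ : ∃ a ∈ L, ¬ IsNilpotent a := by
    by_contra! hnil
    exact hL (le_bot_iff.1 (hJ ▸ le_jacobson_of_forall_isNilpotent hnil))
  obtain ⟨b, hidem, hne⟩ :=
    exists_isIdempotentElem_mul_of_isAlgebraic (Algebra.IsAlgebraic.isAlgebraic (R := K) a) hnil
  exact ⟨b * a, L.mul_mem_left b haL, hidem, hne⟩

theorem transcendental_of_smul_eq_smul {ι M : Type*} [Infinite ι] [AddCommGroup M] [Module K M]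
    [Module R M] [IsScalarTower K R M] {a : R} {c : ι → K} (hc : Function.Injective c) {m : ι → M}
    (hm : ∀ i, m i ≠ 0) (ham : ∀ i, a • m i = c i • m i) : Transcendental K a := by
  rintro ⟨p, hp, hpa⟩
  have hroot : ∀ i, p.IsRoot (c i) := fun i => by
    have heval : Polynomial.aeval (Algebra.lsmul K K M a) p (m i) = p.eval (c i) • m i :=
      Module.End.aeval_apply_of_mem_apply_eq_smul (ham i)
    rw [Polynomial.aeval_algHom_apply, hpa, map_zero, LinearMap.zero_apply] at heval
    exact (smul_eq_zero.1 heval.symm).resolve_right (hm i)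
  exact Set.infinite_range_of_injective hc <|
    (Polynomial.finite_setOfPred_isRoot hp).subset (Set.range_subset_iff.2 hroot)

theorem finite_of_isSemisimpleRing_of_isAlgebraic [IsAlgClosed K] [IsSemisimpleRing R]
    [Algebra.IsAlgebraic K R] : Module.Finite K R := by
  obtain ⟨n, D, d, _, _, _, ⟨φ⟩⟩ := IsSemisimpleRing.exists_algEquiv_pi_matrix_divisionRing K R
  have hfinite : ∀ i, Module.Finite K (D i) := fun i => by
    have : Algebra.IsIntegral K (Matrix (Fin (d i)) (Fin (d i)) (D i)) :=
      .of_surjective ((Pi.evalAlgHom K _ i).comp φ.toAlgHom)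
        ((Function.surjective_eval i).comp φ.surjective)
    have : Algebra.IsIntegral K (D i) :=
      .of_injective (Matrix.scalarAlgHom (Fin (d i)) K) fun _ _ => Matrix.scalar_inj.1
    exact .of_surjective (Algebra.linearMap K (D i))
      IsAlgClosed.algebraMap_bijective_of_isIntegral.surjective
  exact .equiv φ.toLinearEquiv.symm

end Algebraic

section Unitization

variable {K A : Type*} [Field K] [NonUnitalRing A] [Module K A] [SMulCommClass K A A]
  [IsScalarTower K A A]

theorem isAlgebraic_unitization_of_forall_mem_finite
    (hA : ∀ a : A, ∃ S : NonUnitalSubalgebra K A, a ∈ S ∧ FiniteDimensional K S) :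
    Algebra.IsAlgebraic K (Unitization K A) := by
  refine ⟨fun x => ?_⟩
  obtain ⟨S, hxS, _⟩ := hA x.snd
  have : Module.Finite K (Unitization K S) := .equiv (Unitization.linearEquiv K K S).symm
  let φ : Unitization K S →ₐ[K] Unitization K A :=
    Unitization.lift <|
      (Unitization.inrNonUnitalAlgHom K A).comp (NonUnitalSubalgebraClass.subtype S)
  have hx : φ (.inl x.fst + .inr ⟨x.snd, hxS⟩) = x := by
    simp [φ, Unitization.algebraMap_eq_inl, Unitization.inl_fst_add_inr_snd_eq]
  exact hx ▸ (Algebra.IsAlgebraic.isAlgebraic _).algHom φ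

theorem jacobson_unitization_eq_bot
    (hA : ∀ a : A, (a : Unitization K A) ∈ Ring.jacobson (Unitization K A) → a = 0) :
    Ring.jacobson (Unitization K A) = ⊥ := by
  refine eq_bot_iff.2 fun x hx => ?_
  have hfst : x.fst = 0 := by
    have : RingHomSurjective (Unitization.fstHom K A).toRingHom :=
      ⟨fun r => ⟨.inl r, Unitization.fst_inl A r⟩⟩
    have hmem : x.fst ∈ Ring.jacobson K :=
      Ring.le_comap_jacobson (Unitization.fstHom K A).toRingHom hx
    rwa [Ring.jacobson, IsSemisimpleModule.jacobson_eq_bot, Submodule.mem_bot] at hmem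
  have hinr : x = (x.snd : Unitization K A) := Unitization.ext hfst rfl
  rw [Ideal.mem_bot, hinr, hA x.snd (hinr ▸ hx), Unitization.inr_zero]

end Unitization

section Normed

variable (𝕜 : Type*) [NontriviallyNormedField 𝕜]

theorem exists_injective_summable_smul {E : Type*} [NormedAddCommGroup E] [NormedSpace 𝕜 E]
    [CompleteSpace E] (v : ℕ → E) :
    ∃ c : ℕ → 𝕜, Function.Injective c ∧ Summable fun n => c n • v n := by
  obtain ⟨q, hq0, hq1⟩ := NormedField.exists_norm_lt_one 𝕜
  have hlim : ∀ n, Filter.Tendsto (fun k => ‖q ^ k • v n‖) Filter.atTop (nhds 0) := fun n => by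
    simpa using ((tendsto_pow_atTop_nhds_zero_of_norm_lt_one hq1).smul_const (v n)).norm
  obtain ⟨k, hk, hbound⟩ := Filter.extraction_forall_of_eventually fun n =>
    (hlim n).eventually_le_const (pow_pos one_half_pos n)
  have hpow : Function.Injective fun k : ℕ => q ^ k := by
    refine Function.Injective.of_comp (f := norm) ?_
    simpa [Function.comp_def] using (pow_right_strictAnti₀ hq0 hq1).injective
  exact ⟨fun n => q ^ k n, hpow.comp hk.injective,
    .of_norm_bounded summable_geometric_two hbound⟩

variable (A : Type*) [NonUnitalNormedRing A] [NormedSpace 𝕜 A] [SMulCommClass 𝕜 A A]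
  [IsScalarTower 𝕜 A A] [CompleteSpace A]

theorem isOrthogonallyFinite_of_isAlgebraic_unitization
    [Algebra.IsAlgebraic 𝕜 (Unitization 𝕜 A)] : IsOrthogonallyFinite A := by
  intro e he hortho
  by_contra! hne
  obtain ⟨c, hc, hsum⟩ := exists_injective_summable_smul 𝕜 e
  let a := ∑' k, c k • e k
  have hmul : ∀ n, a * e n = c n • e n := fun n => by
    rw [← hsum.tsum_mul_right, tsum_eq_single n, smul_mul_assoc, he n]
    intro m hm
    rw [smul_mul_assoc, hortho hm, smul_zero]
  have htrans : Transcendental 𝕜 (a : Unitization 𝕜 A) :=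
    transcendental_of_smul_eq_smul (M := Unitization 𝕜 A) hc (m := fun n => (e n : Unitization 𝕜 A))
      (fun n => Unitization.inr_injective.ne (hne n))
      fun n => by rw [smul_eq_mul, ← Unitization.inr_mul, hmul, Unitization.inr_smul]
  exact htrans (Algebra.IsAlgebraic.isAlgebraic _)

theorem finiteDimensional_of_algebraic_semisimple_banach_general [IsAlgClosed 𝕜]
    (halg : ∀ a : A, ∃ S : NonUnitalSubalgebra 𝕜 A, a ∈ S ∧ FiniteDimensional 𝕜 S)
    (hss : ∀ a : A, (a : Unitization 𝕜 A) ∈ (⊥ : Ideal (Unitization 𝕜 A)).jacobson → a = 0) :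
    FiniteDimensional 𝕜 A := by
  have := isAlgebraic_unitization_of_forall_mem_finite halg
  have hJ : Ring.jacobson (Unitization 𝕜 A) = ⊥ :=
    jacobson_unitization_eq_bot fun a ha => hss a (by rwa [Ideal.jacobson_bot])
  have hfin : IsOrthogonallyFinite (Unitization 𝕜 A) :=
    (isOrthogonallyFinite_of_isAlgebraic_unitization 𝕜 A).unitization
  have : IsSemisimpleRing (Unitization 𝕜 A) :=
    isSemisimpleRing_of_isOrthogonallyFinite hfin fun _ =>
      exists_mem_isIdempotentElem_ne_zero (K := 𝕜) hJ
  have : Module.Finite 𝕜 (Unitization 𝕜 A) := finite_of_isSemisimpleRing_of_isAlgebraic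
  exact .of_injective (Unitization.inrHom 𝕜 𝕜 A) Unitization.inr_injective

end Normed

/-- Every complex Banach algebra that is algebraic and semisimple is
finite dimensional. -/
theorem finiteDimensional_of_algebraic_semisimple_banach (A : Type*)
    [NonUnitalNormedRing A] [NormedSpace ℂ A] [SMulCommClass ℂ A A] [IsScalarTower ℂ A A]
    [CompleteSpace A]
    (halg : IsAlgebraicAlgebra A) (hss : IsSemisimpleAlgebra A) :
    FiniteDimensional ℂ A :=
  finiteDimensional_of_algebraic_semisimple_banach_general ℂ A halg hss
end

section
/- Let A be a complex *-algebra that is algebraic and admits a pre-C*-norm. Then A satisfies the (EP)-axiom: for every a ∈ A with a ≠ 0 there exists w in the bicommutant {a*a}'' of {a*a} such that w = w* and (a*a)w² is a nonzero projection. -/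
/-- The commutant of a subset of a multiplicative structure. -/
def commutant {A : Type*} [Mul A] (S : Set A) : Set A :=
  {a : A | ∀ s ∈ S, a * s = s * a}

/-!
Complete the unitization of `A`, normed by the pre-C*-norm, to a C*-algebra `B` containing `A`. In
`B` the element `b = a* a` is positive, and its spectrum is finite because `b` is algebraic. Hence
`x ↦ 1 / √x`, extended by `0` to `x ≤ 0`, is continuous on the spectrum of `b`, and the functional
calculus yields `w` such that `b * w²` is the range projection of `b`. The *-algebra generated by
`b` is finite-dimensional, hence closed in `B`, so `w` lies in it, and in particular in `A`.
-/

open UniformSpace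

universe u

section Completion

variable {A : Type*}

section StarRing

variable [SeminormedRing A] [StarRing A] [NormedStarGroup A]

noncomputable instance : Star (Completion A) := ⟨Completion.map star⟩

theorem completion_coe_star (a : A) : ((star a : A) : Completion A) = star (a : Completion A) :=
  (Completion.map_coe star_isometry.uniformContinuous a).symm

instance : ContinuousStar (Completion A) := ⟨Completion.continuous_map⟩

noncomputable instance : StarRing (Completion A) where
  star_involutive x := by
    induction x using Completion.induction_on with
    | hp => exact isClosed_eq (by fun_prop) (by fun_prop)
    | ih a => rw [← completion_coe_star, ← completion_coe_star, star_star]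
  star_mul x y := by
    induction x, y using Completion.induction_on₂ with
    | hp => exact isClosed_eq (by fun_prop) (by fun_prop)
    | ih a b => simp only [← Completion.coe_mul, ← completion_coe_star, star_mul]
  star_add x y := by
    induction x, y using Completion.induction_on₂ with
    | hp => exact isClosed_eq (by fun_prop) (by fun_prop)
    | ih a b => simp only [← Completion.coe_add, ← completion_coe_star, star_add]

instance {𝕜 : Type*} [NormedField 𝕜] [Star 𝕜] [NormedAlgebra 𝕜 A] [StarModule 𝕜 A] :
    StarModule 𝕜 (Completion A) where
  star_smul c x := by
    induction x using Completion.induction_on with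
    | hp => exact isClosed_eq (continuous_const_smul c).star (continuous_star.const_smul (star c))
    | ih a => simp only [← Completion.coe_smul, ← completion_coe_star, star_smul]

end StarRing

noncomputable instance {𝕜 : Type*} [NormedField 𝕜] [SeminormedRing A] [NormedAlgebra 𝕜 A] :
    NormedAlgebra 𝕜 (Completion A) where
  norm_smul_le := norm_smul_le

instance [NormedRing A] [StarRing A] [CStarRing A] : CStarRing (Completion A) where
  norm_mul_self_le x := by
    induction x using Completion.induction_on with
    | hp => exact isClosed_le (by fun_prop) (by fun_prop)
    | ih a =>
      simp only [← completion_coe_star, ← Completion.coe_mul, Completion.norm_coe,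
        CStarRing.norm_star_mul_self, le_refl]

noncomputable instance [NormedRing A] [StarRing A] [CStarRing A] [NormedAlgebra ℂ A]
    [StarModule ℂ A] : CStarAlgebra (Completion A) where

end Completion

section Embedding

theorem exists_injective_starAlgHom_cstarAlgebra (A : Type u) [NormedRing A] [StarRing A]
    [CStarRing A] [NormedAlgebra ℂ A] [StarModule ℂ A] :
    ∃ (B : Type u) (_ : CStarAlgebra B) (φ : A →⋆ₐ[ℂ] B), Function.Injective φ :=
  let φ : A →⋆ₐ[ℂ] Completion A :=
    { Completion.coeRingHom with
      commutes' := fun _ ↦ rfl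
      map_star' := completion_coe_star }
  ⟨Completion A, inferInstance, φ, Completion.coe_injective A⟩

theorem exists_injective_nonUnitalStarAlgHom_cstarAlgebra (A : Type u) [NonUnitalNormedRing A]
    [StarRing A] [CStarRing A] [NormedSpace ℂ A] [IsScalarTower ℂ A A] [SMulCommClass ℂ A A]
    [StarModule ℂ A] :
    ∃ (B : Type u) (_ : CStarAlgebra B) (φ : A →⋆ₙₐ[ℂ] B), Function.Injective φ := by
  obtain ⟨B, hB, φ, hφ⟩ := exists_injective_starAlgHom_cstarAlgebra (Unitization ℂ A)
  exact ⟨B, hB, φ.toNonUnitalStarAlgHom.comp (Unitization.inrNonUnitalStarAlgHom ℂ A),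
    hφ.comp Unitization.inr_injective⟩

/-- The normed ring structure on a non-unital ring given by a ring norm, keeping the ring structure
definitionally unchanged. -/
abbrev nonUnitalNormedRingOfRingNorm {A : Type*} [NonUnitalRing A] (σ : RingNorm A) :
    NonUnitalNormedRing A where
  __ := ‹NonUnitalRing A›
  __ := σ.toAddGroupNorm.toNormedAddCommGroup
  norm_mul_le := map_mul_le_mul σ

theorem HasPreCstarNorm.exists_ringNorm {A : Type*} [NonUnitalRing A] [Module ℂ A] [Star A]
    (h : HasPreCstarNorm A) :
    ∃ σ : RingNorm A, (∀ (c : ℂ) (a : A), σ (c • a) = ‖c‖ * σ a) ∧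
      ∀ a : A, σ (star a * a) = σ a ^ 2 := by
  obtain ⟨σ, eq_zero_iff, smul, add_le, mul_le, star_mul_self⟩ := h
  exact ⟨{ toFun := σ
           map_zero' := (eq_zero_iff 0).2 rfl
           add_le' := add_le
           neg' := fun a ↦ by simpa using smul (-1) a
           mul_le' := mul_le
           eq_zero_of_map_eq_zero' := fun a ↦ (eq_zero_iff a).1 }, smul, star_mul_self⟩

theorem HasPreCstarNorm.exists_injective_nonUnitalStarAlgHom {A : Type u} [NonUnitalRing A]
    [Module ℂ A] [SMulCommClass ℂ A A] [IsScalarTower ℂ A A] [StarRing A] [StarModule ℂ A]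
    (h : HasPreCstarNorm A) :
    ∃ (B : Type u) (_ : CStarAlgebra B) (φ : A →⋆ₙₐ[ℂ] B), Function.Injective φ := by
  obtain ⟨σ, smul, star_mul_self⟩ := h.exists_ringNorm
  let := nonUnitalNormedRingOfRingNorm σ
  let : NormedSpace ℂ A := { norm_smul_le := fun c a ↦ (smul c a).le }
  have : CStarRing A := ⟨fun a ↦ by rw [← sq]; exact (star_mul_self a).ge⟩
  exact exists_injective_nonUnitalStarAlgHom_cstarAlgebra A

end Embedding

section FiniteSpectrum

theorem finite_spectrum_of_isIntegral_s7 {𝕜 B : Type*} [Field 𝕜] [Ring B] [Algebra 𝕜 B] {b : B}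
    (hb : IsIntegral 𝕜 b) : (spectrum 𝕜 b).Finite := by
  nontriviality B
  refine ((minpoly 𝕜 b).rootSet_finite 𝕜).subset fun x hx ↦ ?_
  have := spectrum.subset_polynomial_aeval b (minpoly 𝕜 b) ⟨x, hx, rfl⟩
  simpa [Polynomial.mem_rootSet, minpoly.ne_zero hb] using this

theorem finite_quasispectrum {𝕜 A : Type*} [Field 𝕜] [NonUnitalRing A] [Module 𝕜 A]
    [IsScalarTower 𝕜 A A] [SMulCommClass 𝕜 A A] [FiniteDimensional 𝕜 A] (a : A) :
    (quasispectrum 𝕜 a).Finite := by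
  have : FiniteDimensional 𝕜 (Unitization 𝕜 A) :=
    Module.Finite.equiv (Unitization.linearEquiv 𝕜 𝕜 A).symm
  rw [Unitization.quasispectrum_eq_spectrum_inr 𝕜]
  exact finite_spectrum_of_isIntegral_s7 (.of_finite 𝕜 _)

theorem finite_quasispectrum_map {𝕜 A B : Type*} [Field 𝕜] [NonUnitalRing A] [Module 𝕜 A]
    [IsScalarTower 𝕜 A A] [SMulCommClass 𝕜 A A] [NonUnitalRing B] [Module 𝕜 B]
    [IsScalarTower 𝕜 B B] [SMulCommClass 𝕜 B B] (φ : A →ₙₐ[𝕜] B) {S : NonUnitalSubalgebra 𝕜 A}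
    [FiniteDimensional 𝕜 S] {a : A} (ha : a ∈ S) : (quasispectrum 𝕜 (φ a)).Finite :=
  (finite_quasispectrum (𝕜 := 𝕜) (⟨a, ha⟩ : S)).subset <|
    NonUnitalAlgHom.quasispectrum_apply_subset
      (φ.comp (NonUnitalSubalgebraClass.subtype S)) (⟨a, ha⟩ : S)

theorem finite_real_quasispectrum_of_complex {B : Type*} [NonUnitalRing B] [Module ℂ B]
    [IsScalarTower ℂ B B] [SMulCommClass ℂ B B] {b : B} (hb : (quasispectrum ℂ b).Finite) :
    (quasispectrum ℝ b).Finite := by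
  rw [← quasispectrum.preimage_algebraMap ℂ]
  exact hb.preimage (algebraMap ℝ ℂ).injective.injOn

end FiniteSpectrum

section FunctionalCalculus

variable {B : Type*} [NonUnitalRing B] [StarRing B] [TopologicalSpace B] [Module ℝ B]
  [IsScalarTower ℝ B B] [SMulCommClass ℝ B B]
  [NonUnitalContinuousFunctionalCalculus ℝ B IsSelfAdjoint] {b : B}

theorem isStarProjection_cfcₙ_indicator (hfin : (quasispectrum ℝ b).Finite) {s : Set ℝ}
    (hs : 0 ∉ s) : IsStarProjection (cfcₙ (s.indicator 1) b) where
  isIdempotentElem := by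
    have hzero : s.indicator (1 : ℝ → ℝ) 0 = 0 := Set.indicator_of_notMem hs 1
    rw [IsIdempotentElem, ← cfcₙ_mul _ _ b (hfin.continuousOn _) hzero (hfin.continuousOn _) hzero]
    refine cfcₙ_congr fun x _ ↦ ?_
    by_cases hx : x ∈ s <;> simp [hx]
  isSelfAdjoint := IsSelfAdjoint.cfcₙ

theorem cfcₙ_indicator_Ioi_zero_mul_self (hb : IsSelfAdjoint b) (hfin : (quasispectrum ℝ b).Finite)
    (hpos : ∀ x ∈ quasispectrum ℝ b, 0 ≤ x) : cfcₙ ((Set.Ioi (0 : ℝ)).indicator 1) b * b = b := by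
  have hcont (f : ℝ → ℝ) : ContinuousOn f (quasispectrum ℝ b) := hfin.continuousOn f
  nth_rw 2 [← cfcₙ_id' ℝ b]
  rw [← cfcₙ_mul _ _ b (hcont _) (by simp) (hcont _) rfl]
  nth_rw 2 [← cfcₙ_id' ℝ b]
  refine cfcₙ_congr fun x hx ↦ ?_
  rcases (hpos x hx).eq_or_lt with rfl | hx <;> simp [*]

theorem self_mul_cfcₙ_inv_sqrt_sq (hb : IsSelfAdjoint b) (hfin : (quasispectrum ℝ b).Finite) :
    b * (cfcₙ (fun x ↦ (√x)⁻¹) b * cfcₙ (fun x ↦ (√x)⁻¹) b) =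
      cfcₙ ((Set.Ioi (0 : ℝ)).indicator 1) b := by
  have hcont (f : ℝ → ℝ) : ContinuousOn f (quasispectrum ℝ b) := hfin.continuousOn f
  nth_rw 1 [← cfcₙ_id' ℝ b]
  rw [← cfcₙ_mul _ _ b (hcont _) (by simp) (hcont _) (by simp),
    ← cfcₙ_mul _ _ b (hcont _) rfl (hcont _) (by simp)]
  refine cfcₙ_congr fun x _ ↦ ?_
  rcases le_or_gt x 0 with hx | hx
  · simp [Real.sqrt_eq_zero_of_nonpos hx, hx]
  · simp [← mul_inv, Real.mul_self_sqrt hx.le, hx, hx.ne']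

end FunctionalCalculus

section StarSubalgebra

variable {A : Type*} [NonUnitalRing A] [StarRing A] [Module ℂ A]

theorem exists_map_eq_cfcₙ {B : Type*} [NonUnitalCStarAlgebra B] (φ : A →⋆ₙₐ[ℂ] B)
    {S : NonUnitalStarSubalgebra ℂ A} [FiniteDimensional ℂ S] {a : A} (ha : a ∈ S) (f : ℝ → ℝ) :
    ∃ w ∈ S, φ w = cfcₙ f (φ a) := by
  have : IsClosed (S.map φ : Set B) :=
    (S.toSubmodule.map (φ : A →ₗ[ℂ] B)).closed_of_finiteDimensional
  exact cfcₙ_mem (𝕜' := ℂ) (s := S.map φ) f (a := φ a) ⟨a, ha, rfl⟩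

variable [SMulCommClass ℂ A A] [IsScalarTower ℂ A A] [StarModule ℂ A] {b : A}

theorem mem_commutant_commutant_of_mem_adjoin (hb : IsSelfAdjoint b) {w : A}
    (hw : w ∈ NonUnitalStarAlgebra.adjoin ℂ {b}) : w ∈ commutant (commutant {b}) := fun y hy ↦ by
  have hyb : Commute y b := hy b rfl
  exact (NonUnitalStarAlgebra.commute_of_mem_adjoin_singleton_of_commute hw hyb
    (by rwa [hb.star_eq])).symm

theorem finiteDimensional_adjoin_singleton (hb : IsSelfAdjoint b) {S : NonUnitalSubalgebra ℂ A}
    [FiniteDimensional ℂ S] (hbS : b ∈ S) :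
    FiniteDimensional ℂ (NonUnitalStarAlgebra.adjoin ℂ {b}) := by
  have hle : (NonUnitalStarAlgebra.adjoin ℂ {b}).toNonUnitalSubalgebra ≤ S := by
    rw [NonUnitalStarAlgebra.adjoin_toNonUnitalSubalgebra, NonUnitalAlgebra.adjoin_le_iff]
    simpa [Set.star_singleton, hb.star_eq] using hbS
  exact Submodule.finiteDimensional_of_le (S₂ := S.toSubmodule) hle

end StarSubalgebra

theorem ep_axiom_of_algebraic_preCstarNorm_general {A : Type*} [NonUnitalRing A] [Module ℂ A]
    [SMulCommClass ℂ A A] [IsScalarTower ℂ A A] [StarRing A] [StarModule ℂ A]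
    (hnorm : HasPreCstarNorm A) {a : A} (ha : a ≠ 0) {S : NonUnitalSubalgebra ℂ A}
    [FiniteDimensional ℂ S] (hS : star a * a ∈ S) :
    ∃ w ∈ commutant (commutant {star a * a}), star w = w ∧
      star (star a * a * (w * w)) = star a * a * (w * w) ∧
      (star a * a * (w * w)) * (star a * a * (w * w)) = star a * a * (w * w) ∧
      star a * a * (w * w) ≠ 0 := by
  obtain ⟨B, _, φ, hφ⟩ := hnorm.exists_injective_nonUnitalStarAlgHom
  have hb : IsSelfAdjoint (star a * a) := .star_mul_self a
  have hfin : (quasispectrum ℝ (φ (star a * a))).Finite :=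
    finite_real_quasispectrum_of_complex (finite_quasispectrum_map (φ : A →ₙₐ[ℂ] B) hS)
  have hpos : ∀ x ∈ quasispectrum ℝ (φ (star a * a)), 0 ≤ x := by
    simpa [quasispectrum_eq_spectrum_union_zero, map_star] using
      spectrum_star_mul_self_nonneg (b := φ a)
  have := finiteDimensional_adjoin_singleton hb hS
  obtain ⟨w, hw, hφw⟩ := exists_map_eq_cfcₙ φ
    (NonUnitalStarAlgebra.self_mem_adjoin_singleton ℂ (star a * a)) fun x ↦ (√x)⁻¹
  have hφp : φ (star a * a * (w * w)) = cfcₙ ((Set.Ioi (0 : ℝ)).indicator 1) (φ (star a * a)) := by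
    rw [map_mul φ (star a * a), map_mul φ w, hφw, self_mul_cfcₙ_inv_sqrt_sq (hb.map φ) hfin]
  have hproj := isStarProjection_cfcₙ_indicator hfin (Set.self_notMem_Ioi (a := (0 : ℝ)))
  rw [← hφp] at hproj
  refine ⟨w, mem_commutant_commutant_of_mem_adjoin hb hw, hφ ?_, hφ ?_, hφ ?_, fun hp ↦ ha ?_⟩
  · rw [map_star, hφw, IsSelfAdjoint.cfcₙ.star_eq]
  · rw [map_star, hproj.isSelfAdjoint.star_eq]
  · rw [map_mul, hproj.isIdempotentElem.eq]
  · have hrange := cfcₙ_indicator_Ioi_zero_mul_self (hb.map φ) hfin hpos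
    rwa [← hφp, hp, map_zero, zero_mul, map_mul, map_star, eq_comm,
      CStarRing.star_mul_self_eq_zero_iff, map_eq_zero_iff φ hφ] at hrange

/-- An algebraic complex `*`-algebra with a pre-C*-norm satisfies the
(EP)-axiom: for every `a ≠ 0` there is a selfadjoint `w` in the bicommutant of `{a* a}`
such that `(a* a) * w²` is a nonzero projection. -/
theorem ep_axiom_of_algebraic_preCstarNorm (A : Type*) [NonUnitalRing A] [Module ℂ A]
    [SMulCommClass ℂ A A] [IsScalarTower ℂ A A] [StarRing A] [StarModule ℂ A]
    (halg : IsAlgebraicAlgebra A) (hnorm : HasPreCstarNorm A) :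
    ∀ a : A, a ≠ 0 → ∃ w ∈ commutant (commutant {star a * a}), star w = w ∧
      star (star a * a * (w * w)) = star a * a * (w * w) ∧
      (star a * a * (w * w)) * (star a * a * (w * w)) = star a * a * (w * w) ∧
      star a * a * (w * w) ≠ 0 := by
  intro a ha
  obtain ⟨S, hS, _⟩ := halg (star a * a)
  exact ep_axiom_of_algebraic_preCstarNorm_general hnorm ha hS
end
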